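/- There exist absolute constants 0 < c ≤ C such that for every θ ∈ (0,1) and every positive integer n, c · n^{(3-θ)/2} θ^{-2} (1-θ)^{-1} ≤ ∫_{A} G(s,t,u,v) ds dt du dv ≤ C · n^{(3-θ)/2} θ^{-2} (1-θ)^{-1}, where A = { (s,t,u,v) ∈ (0,∞)⁴ : 0 < u < 1, v ≥ n^{1/2}, s ≥ n^{1/4} u^{1/2}, t ≥ 1 }. -/

import Mathlib

open MeasureTheory Set Real

/-- The integrand `G(s,t,u,v)` from the paper's computation of the completely 1-summing
norm of the identity `OH_n → ℓ^n_p`, with `θ = 2/p'`. Here `p = (s, t, u, v)`. -/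
noncomputable def G (θ : ℝ) (n : ℕ) (p : ℝ × ℝ × ℝ × ℝ) : ℝ :=
  (n : ℝ) ^ (2 : ℕ) * p.1 ^ (-1 - 2 * θ) * p.2.1 ^ (-1 - 2 * θ) *
    min (min (min ((n : ℝ)⁻¹ * p.1 ^ (4 : ℝ) * p.2.2.1 ^ (-2 : ℝ) * p.2.2.2 ^ (-2 : ℝ))
                  ((n : ℝ)⁻¹ * p.2.1 ^ (4 : ℝ)))
             (min (p.1 ^ (4 : ℝ) * p.2.2.1 ^ (-2 : ℝ)) (p.2.1 ^ (4 : ℝ) * p.2.2.2 ^ (-2 : ℝ))))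
        (min (min (p.2.2.1 ^ (-2 : ℝ) * p.2.2.2 ^ (-2 : ℝ)) (p.2.2.1 ^ (-2 : ℝ)))
             (min 1 (p.2.2.2 ^ (-2 : ℝ))))

/-- The region of integration. -/
def A (n : ℕ) : Set (ℝ × ℝ × ℝ × ℝ) :=
  {p | 0 < p.1 ∧ 0 < p.2.1 ∧ 0 < p.2.2.1 ∧ 0 < p.2.2.2 ∧ p.2.2.1 < 1 ∧ (n : ℝ) ^ ((1:ℝ)/2) ≤ p.2.2.2 ∧ (n : ℝ) ^ ((1:ℝ)/4) * p.2.2.1 ^ ((1:ℝ)/2) ≤ p.1 ∧ 1 ≤ p.2.1}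

/-!
On `A` the bounds `n ≤ s⁴u⁻²`, `v⁻² ≤ n⁻¹ ≤ 1`, `1 ≤ t⁴` and `1 ≤ u⁻²` make `v⁻²` the smallest of
the eight terms, so that `G` is the monomial `n² s^(-1-2θ) t^(-1-2θ) v⁻²` there. Integrating first
over `s ≥ n^(1/4) u^(1/2)` produces `n^(-θ/2) u^(-θ) / (2θ)`, and what is left is a product of
integrals over `t ≥ 1`, `0 < u < 1` and `v ≥ n^(1/2)`, equal to `1 / (2θ)`, `1 / (1 - θ)` and
`n^(-1/2)`. Hence the integral is exactly `n^((3-θ)/2) θ⁻² (1-θ)⁻¹ / 4`.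
-/

section Fubini

variable {α β : Type*} [MeasurableSpace α] [MeasurableSpace β] {μ : Measure α} {ν : Measure β}

theorem integral_prod_symm_of_nonneg [SFinite μ] [SFinite ν] {f : α × β → ℝ}
    (hf : AEStronglyMeasurable f (μ.prod ν)) (hf_nonneg : 0 ≤ f)
    (hf_section : ∀ᵐ y ∂ν, Integrable (fun x ↦ f (x, y)) μ) :
    ∫ z, f z ∂μ.prod ν = ∫ y, ∫ x, f (x, y) ∂μ ∂ν := by
  by_cases hfi : Integrable f (μ.prod ν)
  · exact integral_prod_symm f hfi
  · -- Then both sides take the junk value `0`.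
    have hfi' : ¬ Integrable (fun y ↦ ∫ x, f (x, y) ∂μ) ν := by
      simpa only [integrable_prod_iff' hf, hf_section, true_and,
        Real.norm_of_nonneg (hf_nonneg _)] using hfi
    rw [integral_undef hfi, integral_undef hfi']

theorem measurableSet_epigraph [PartialOrder α] [TopologicalSpace α] [OrderClosedTopology α]
    [SecondCountableTopology α] [OpensMeasurableSpace α] {B : Set β} (hB : MeasurableSet B)
    {a : β → α} (ha : Measurable a) :
    MeasurableSet {z : α × β | z.2 ∈ B ∧ z.1 ∈ Ici (a z.2)} :=
  (measurable_snd hB).inter (measurableSet_le (ha.comp measurable_snd) measurable_fst)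

theorem setIntegral_epigraph_of_nonneg [SFinite μ] [SFinite ν] [PartialOrder α] [TopologicalSpace α]
    [OrderClosedTopology α] [SecondCountableTopology α] [OpensMeasurableSpace α]
    {B : Set β} (hB : MeasurableSet B) {a : β → α} (ha : Measurable a)
    {f : α × β → ℝ} (hf : Measurable f) (hf_nonneg : ∀ y ∈ B, ∀ x ∈ Ici (a y), 0 ≤ f (x, y))
    (hf_section : ∀ y ∈ B, IntegrableOn (fun x ↦ f (x, y)) (Ici (a y)) μ) :
    ∫ z in {z : α × β | z.2 ∈ B ∧ z.1 ∈ Ici (a z.2)}, f z ∂μ.prod ν =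
      ∫ y in B, ∫ x in Ici (a y), f (x, y) ∂μ ∂ν := by
  set E : Set (α × β) := {z | z.2 ∈ B ∧ z.1 ∈ Ici (a z.2)}
  have hE : MeasurableSet E := measurableSet_epigraph hB ha
  have section_of_mem {y : β} (hy : y ∈ B) :
      (fun x ↦ E.indicator f (x, y)) = (Ici (a y)).indicator fun x ↦ f (x, y) := by
    ext x; by_cases hx : a y ≤ x <;> simp [E, hy, hx]
  have section_of_notMem {y : β} (hy : y ∉ B) : (fun x ↦ E.indicator f (x, y)) = 0 := by
    ext x; simp [E, hy]
  rw [← integral_indicator hE, ← integral_indicator hB, integral_prod_symm_of_nonneg]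
  · congr 1 with y
    by_cases hy : y ∈ B
    · rw [indicator_of_mem hy, section_of_mem hy, integral_indicator measurableSet_Ici]
    · rw [indicator_of_notMem hy, section_of_notMem hy]
      exact integral_zero α ℝ
  · exact (hf.indicator hE).aestronglyMeasurable
  · exact indicator_nonneg fun z hz ↦ hf_nonneg z.2 hz.1 z.1 hz.2
  · refine ae_of_all _ fun y ↦ ?_
    by_cases hy : y ∈ B
    · rw [section_of_mem hy]
      exact (hf_section y hy).integrable_indicator measurableSet_Ici
    · rw [section_of_notMem hy]
      exact integrable_zero α ℝ μ

theorem setIntegral_prod_mul_mul {γ 𝕜 : Type*} [MeasurableSpace γ] {ρ : Measure γ} [RCLike 𝕜]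
    [SFinite μ] [SFinite ν] [SFinite ρ] (f : α → 𝕜) (g : β → 𝕜) (h : γ → 𝕜)
    (s : Set α) (t : Set β) (u : Set γ) :
    ∫ q in s ×ˢ t ×ˢ u, f q.1 * (g q.2.1 * h q.2.2) ∂μ.prod (ν.prod ρ) =
      (∫ x in s, f x ∂μ) * ((∫ y in t, g y ∂ν) * ∫ z in u, h z ∂ρ) := by
  rw [setIntegral_prod_mul f (fun r : β × γ ↦ g r.1 * h r.2), setIntegral_prod_mul]

end Fubini

section PowerIntegrals

theorem integral_Ici_rpow_of_lt {r a : ℝ} (hr : r < -1) (ha : 0 < a) :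
    ∫ x in Ici a, x ^ r = -a ^ (r + 1) / (r + 1) := by
  rw [integral_Ici_eq_integral_Ioi, integral_Ioi_rpow_of_lt hr ha]

theorem integrableOn_Ici_rpow_of_lt {r a : ℝ} (hr : r < -1) (ha : 0 < a) :
    IntegrableOn (fun x : ℝ ↦ x ^ r) (Ici a) :=
  (integrableOn_Ici_iff_integrableOn_Ioi (by finiteness)).2 (integrableOn_Ioi_rpow_of_lt hr ha)

theorem integral_Ioo_zero_rpow {r b : ℝ} (hr : -1 < r) (hb : 0 ≤ b) :
    ∫ x in Ioo 0 b, x ^ r = b ^ (r + 1) / (r + 1) := by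
  rw [← integral_Ioc_eq_integral_Ioo, ← intervalIntegral.integral_of_le hb,
    integral_rpow (Or.inl hr), zero_rpow (by linarith), sub_zero]

theorem integral_Ici_rpow_quarter_mul_rpow_half {θ x u : ℝ} (hθ : 0 < θ) (hx : 0 < x)
    (hu : 0 < u) :
    ∫ s in Ici (x ^ ((1 : ℝ) / 4) * u ^ ((1 : ℝ) / 2)), s ^ (-1 - 2 * θ) =
      x ^ (-θ / 2) * u ^ (-θ) / (2 * θ) := by
  rw [integral_Ici_rpow_of_lt (by linarith) (by positivity),
    mul_rpow (by positivity) (by positivity), ← rpow_mul hx.le, ← rpow_mul hu.le,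
    show -1 - 2 * θ + 1 = -(2 * θ) by ring, neg_div_neg_eq]
  ring_nf

end PowerIntegrals

section Integrand

theorem rpow_neg_two_le_inv_of_rpow_half_le {x v : ℝ} (hx : 0 < x) (hv : x ^ ((1 : ℝ) / 2) ≤ v) :
    v ^ (-2 : ℝ) ≤ x⁻¹ :=
  calc v ^ (-2 : ℝ) ≤ (x ^ ((1 : ℝ) / 2)) ^ (-2 : ℝ) :=
        rpow_le_rpow_of_nonpos (rpow_pos_of_pos hx _) hv (by norm_num)
    _ = x⁻¹ := by rw [← rpow_mul hx.le, ← rpow_neg_one]; norm_num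

theorem le_rpow_four_mul_rpow_neg_two {x u s : ℝ} (hx : 0 ≤ x) (hu : 0 < u)
    (hs : x ^ ((1 : ℝ) / 4) * u ^ ((1 : ℝ) / 2) ≤ s) : x ≤ s ^ (4 : ℝ) * u ^ (-2 : ℝ) :=
  calc x = (x ^ ((1 : ℝ) / 4) * u ^ ((1 : ℝ) / 2)) ^ (4 : ℝ) * u ^ (-2 : ℝ) := by
        rw [mul_rpow (by positivity) (by positivity), ← rpow_mul hx, ← rpow_mul hu.le, mul_assoc,
          ← rpow_add hu]
        norm_num
    _ ≤ s ^ (4 : ℝ) * u ^ (-2 : ℝ) := by gcongr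

-- Here `x, S, T, U, V` stand for `n, s⁴, t⁴, u⁻², v⁻²`.
theorem min_terms_eq {x S T U V : ℝ} (hx : 1 ≤ x) (hSU : x ≤ S * U) (hT : 1 ≤ T) (hU : 1 ≤ U)
    (hV : 0 ≤ V) (hVx : V ≤ x⁻¹) :
    min (min (min (x⁻¹ * S * U * V) (x⁻¹ * T)) (min (S * U) (T * V)))
      (min (min (U * V) U) (min 1 V)) = V := by
  have hx_pos : 0 < x := one_pos.trans_le hx
  have hV_le_one : V ≤ 1 := hVx.trans (inv_le_one_of_one_le₀ hx)
  have h₁ : V ≤ x⁻¹ * S * U * V :=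
    le_mul_of_one_le_left hV (by rwa [mul_assoc, one_le_inv_mul₀ hx_pos])
  have h₂ : V ≤ x⁻¹ * T := hVx.trans (le_mul_of_one_le_right (by positivity) hT)
  have h₃ : V ≤ S * U := hV_le_one.trans (hx.trans hSU)
  have h₄ : V ≤ T * V := le_mul_of_one_le_left hV hT
  have h₅ : V ≤ U * V := le_mul_of_one_le_left hV hU
  refine le_antisymm (by simp only [min_le_iff, le_refl, or_true]) ?_
  simp only [le_min_iff]
  exact ⟨⟨⟨h₁, h₂⟩, h₃, h₄⟩, ⟨h₅, hV_le_one.trans hU⟩, hV_le_one, le_rfl⟩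

theorem G_of_mem_A {θ : ℝ} {n : ℕ} (hn : 0 < n) {p : ℝ × ℝ × ℝ × ℝ} (hp : p ∈ A n) :
    G θ n p = (n : ℝ) ^ 2 * p.1 ^ (-1 - 2 * θ) * p.2.1 ^ (-1 - 2 * θ) * p.2.2.2 ^ (-2 : ℝ) := by
  obtain ⟨-, -, hu, hv, hu_lt, hv_ge, hs_ge, ht_ge⟩ := hp
  have hn_pos : (0 : ℝ) < n := by exact_mod_cast hn
  rw [G, min_terms_eq (Nat.one_le_cast.2 hn)
    (le_rpow_four_mul_rpow_neg_two hn_pos.le hu hs_ge) (one_le_rpow ht_ge (by norm_num))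
    (one_le_rpow_of_pos_of_le_one_of_nonpos hu hu_lt.le (by norm_num))
    (rpow_nonneg hv.le _) (rpow_neg_two_le_inv_of_rpow_half_le hn_pos hv_ge)]

end Integrand

section Region

/-- The range of `(t, u, v)` on the region `A n`. -/
def tuvBox (n : ℕ) : Set (ℝ × ℝ × ℝ) :=
  Ici 1 ×ˢ Ioo 0 1 ×ˢ Ici ((n : ℝ) ^ ((1 : ℝ) / 2))

theorem measurableSet_tuvBox (n : ℕ) : MeasurableSet (tuvBox n) :=
  measurableSet_Ici.prod (measurableSet_Ioo.prod measurableSet_Ici)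

theorem A_eq_epigraph {n : ℕ} (hn : 0 < n) :
    A n = {p | p.2 ∈ tuvBox n ∧
      p.1 ∈ Ici ((n : ℝ) ^ ((1 : ℝ) / 4) * p.2.2.1 ^ ((1 : ℝ) / 2))} := by
  ext ⟨s, t, u, v⟩
  constructor
  · rintro ⟨-, -, hu, -, hu_lt, hv_ge, hs_ge, ht_ge⟩
    exact ⟨⟨ht_ge, ⟨hu, hu_lt⟩, hv_ge⟩, hs_ge⟩
  · rintro ⟨⟨ht_ge, ⟨hu, hu_lt⟩, hv_ge⟩, hs_ge⟩
    have hs : 0 < s := lt_of_lt_of_le (mul_pos (by positivity) (rpow_pos_of_pos hu _)) hs_ge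
    have hv : 0 < v := lt_of_lt_of_le (by positivity) hv_ge
    exact ⟨hs, one_pos.trans_le ht_ge, hu, hv, hu_lt, hv_ge, hs_ge, ht_ge⟩

end Region

theorem setIntegral_A_G_eq_setIntegral_tuvBox {θ : ℝ} (hθ : 0 < θ) {n : ℕ} (hn : 0 < n) :
    ∫ p in A n, G θ n p = ∫ q in tuvBox n, (n : ℝ) ^ 2 * ((n : ℝ) ^ (-θ / 2) / (2 * θ)) *
      (q.1 ^ (-1 - 2 * θ) * (q.2.1 ^ (-θ) * q.2.2 ^ (-2 : ℝ))) := by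
  set a : ℝ × ℝ × ℝ → ℝ := fun q ↦ (n : ℝ) ^ ((1 : ℝ) / 4) * q.2.1 ^ ((1 : ℝ) / 2)
  have hn_pos : (0 : ℝ) < n := by exact_mod_cast hn
  have a_pos {q : ℝ × ℝ × ℝ} (hq : q ∈ tuvBox n) : 0 < a q :=
    mul_pos (by positivity) (rpow_pos_of_pos hq.2.1.1 _)
  have hA : MeasurableSet (A n) := by
    rw [A_eq_epigraph hn]
    exact measurableSet_epigraph (a := a) (measurableSet_tuvBox n) (by fun_prop)
  have hG : EqOn (G θ n) (fun p ↦ (n : ℝ) ^ 2 * p.1 ^ (-1 - 2 * θ) * p.2.1 ^ (-1 - 2 * θ) *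
      p.2.2.2 ^ (-2 : ℝ)) (A n) := fun _ ↦ G_of_mem_A hn
  rw [setIntegral_congr_fun hA hG, A_eq_epigraph hn, Measure.volume_eq_prod,
    setIntegral_epigraph_of_nonneg (a := a) (measurableSet_tuvBox n) (by fun_prop) (by fun_prop)]
  · refine setIntegral_congr_fun (measurableSet_tuvBox n) fun q hq ↦ ?_
    simp only [integral_mul_const, integral_const_mul, a]
    rw [integral_Ici_rpow_quarter_mul_rpow_half hθ hn_pos hq.2.1.1]
    ring
  · rintro ⟨t, u, v⟩ hq s hs
    have hs_pos : 0 < s := (a_pos hq).trans_le hs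
    have ht_pos : 0 < t := one_pos.trans_le hq.1
    have hv_pos : 0 < v := (rpow_pos_of_pos hn_pos _).trans_le hq.2.2
    positivity
  · intro q hq
    have hs_int : IntegrableOn (fun s : ℝ ↦ s ^ (-1 - 2 * θ)) (Ici (a q)) :=
      integrableOn_Ici_rpow_of_lt (by linarith) (a_pos hq)
    exact ((hs_int.const_mul _).mul_const (q.1 ^ (-1 - 2 * θ))).mul_const (q.2.2 ^ (-2 : ℝ))

theorem setIntegral_A_G {θ : ℝ} (hθ : 0 < θ) (hθ_lt : θ < 1) {n : ℕ} (hn : 0 < n) :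
    ∫ p in A n, G θ n p =
      1 / 4 * ((n : ℝ) ^ ((3 - θ) / 2) * θ ^ (-2 : ℝ) * (1 - θ) ^ (-1 : ℝ)) := by
  have hn_pos : (0 : ℝ) < n := by exact_mod_cast hn
  have ht : ∫ t in Ici (1 : ℝ), t ^ (-1 - 2 * θ) = 1 / (2 * θ) := by
    rw [integral_Ici_rpow_of_lt (by linarith) one_pos, one_rpow,
      show -1 - 2 * θ + 1 = -(2 * θ) by ring, neg_div_neg_eq]
  have hu : ∫ u in Ioo (0 : ℝ) 1, u ^ (-θ) = 1 / (1 - θ) := by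
    rw [integral_Ioo_zero_rpow (by linarith) zero_le_one, one_rpow, neg_add_eq_sub]
  have hv : ∫ v in Ici ((n : ℝ) ^ ((1 : ℝ) / 2)), v ^ (-2 : ℝ) = (n : ℝ) ^ (-(1 : ℝ) / 2) := by
    rw [integral_Ici_rpow_of_lt (by norm_num) (by positivity), ← rpow_mul hn_pos.le]
    norm_num
  have hpow : (n : ℝ) ^ ((3 - θ) / 2) =
      (n : ℝ) ^ 2 * (n : ℝ) ^ (-θ / 2) * (n : ℝ) ^ (-(1 : ℝ) / 2) := by
    rw [← rpow_two, ← rpow_add hn_pos, ← rpow_add hn_pos]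
    ring_nf
  have h_sub : 1 - θ ≠ 0 := (sub_pos.2 hθ_lt).ne'
  rw [setIntegral_A_G_eq_setIntegral_tuvBox hθ hn, integral_const_mul, tuvBox,
    Measure.volume_eq_prod, Measure.volume_eq_prod,
    setIntegral_prod_mul_mul (· ^ (-1 - 2 * θ)) (· ^ (-θ)) (· ^ (-2 : ℝ)),
    ht, hu, hv, hpow, rpow_neg_one, rpow_neg hθ.le, rpow_two]
  field_simp
  norm_num

theorem stmt_10 :
    ∃ c C : ℝ, 0 < c ∧ c ≤ C ∧ ∀ θ : ℝ, 0 < θ → θ < 1 → ∀ n : ℕ, 0 < n →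
      c * ((n : ℝ) ^ ((3 - θ) / 2) * θ ^ (-2 : ℝ) * (1 - θ) ^ (-1 : ℝ)) ≤ (∫ p in A n, G θ n p) ∧
      (∫ p in A n, G θ n p) ≤ C * ((n : ℝ) ^ ((3 - θ) / 2) * θ ^ (-2 : ℝ) * (1 - θ) ^ (-1 : ℝ)) := by
  refine ⟨1 / 4, 1 / 4, by norm_num, le_rfl, fun θ hθ hθ_lt n hn ↦ ?_⟩
  have h_eq := setIntegral_A_G hθ hθ_lt hn
  exact ⟨h_eq.ge, h_eq.le⟩
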